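/- Let r ≥ 2 and let H be an r-regular 3-partite 3-graph with n vertices in each vertex class, and let ε ≥ 0. If ν(H) ≤ (1 + ε)·n/2, then H contains at least (1 − (30r − 35)ε)·n/2 connected components that are copies of (r/2)·F, where F is the truncated Fano plane. -/

import Mathlib

namespace Tripartite

/-- The degree of a vertex `a` in the first class of a 3-partite 3-multihypergraph,
whose edges are given as a multiset of triples (so parallel edges are allowed). -/
def deg1 {α β γ : Type*} [DecidableEq α] (H : Multiset (α × β × γ)) (a : α) : ℕ :=
  (H.filter fun e => e.1 = a).card

/-- The degree of a vertex `b` in the second class. -/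
def deg2 {α β γ : Type*} [DecidableEq β] (H : Multiset (α × β × γ)) (b : β) : ℕ :=
  (H.filter fun e => e.2.1 = b).card

/-- The degree of a vertex `c` in the third class. -/
def deg3 {α β γ : Type*} [DecidableEq γ] (H : Multiset (α × β × γ)) (c : γ) : ℕ :=
  (H.filter fun e => e.2.2 = c).card

/-- `H` is `r`-regular: every vertex of every class has degree exactly `r`. -/
def IsRegular {α β γ : Type*} [DecidableEq α] [DecidableEq β] [DecidableEq γ]
    (H : Multiset (α × β × γ)) (r : ℕ) : Prop :=
  (∀ a, deg1 H a = r) ∧ (∀ b, deg2 H b = r) ∧ (∀ c, deg3 H c = r)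

/-- A matching of `H`: a set of edges of `H` that are pairwise disjoint. -/
def IsMatching {α β γ : Type*} (H : Multiset (α × β × γ)) (M : Finset (α × β × γ)) : Prop :=
  (∀ e ∈ M, e ∈ H) ∧
  ∀ e ∈ M, ∀ f ∈ M, e ≠ f → e.1 ≠ f.1 ∧ e.2.1 ≠ f.2.1 ∧ e.2.2 ≠ f.2.2

/-- The matching number ν(H): the maximum size of a matching of `H`. -/
noncomputable def matchNum {α β γ : Type*} (H : Multiset (α × β × γ)) : ℕ :=
  sSup {k | ∃ M : Finset (α × β × γ), IsMatching H M ∧ M.card = k}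

/-- The edge multiset of the truncated Fano plane `F` on vertices `x1, y1` (first class),
`x2, y2` (second class), `x3, y3` (third class). -/
def fanoEdges {α β γ : Type*} (x1 y1 : α) (x2 y2 : β) (x3 y3 : γ) :
    Multiset (α × β × γ) :=
  {(x1, x2, x3), (x1, y2, y3), (y1, x2, y3), (y1, y2, x3)}

/-- The six vertices `x1, y1, x2, y2, x3, y3` span a copy of `s • F` in `H`, i.e. a
subhypergraph in which every edge of the truncated Fano plane appears with
multiplicity (at least) `s`. -/
def IsFanoCopy {α β γ : Type*} (H : Multiset (α × β × γ)) (s : ℕ)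
    (x1 y1 : α) (x2 y2 : β) (x3 y3 : γ) : Prop :=
  x1 ≠ y1 ∧ x2 ≠ y2 ∧ x3 ≠ y3 ∧ s • fanoEdges x1 y1 x2 y2 x3 y3 ≤ H

/-- The six vertices `x1, y1, x2, y2, x3, y3` span a connected component of `H` that is a
copy of `s • F`: the multiset of edges of `H` meeting one of these six vertices is exactly
`s` parallel copies of each of the four edges of the truncated Fano plane. -/
def IsFanoComponent {α β γ : Type*} [DecidableEq α] [DecidableEq β] [DecidableEq γ]
    (H : Multiset (α × β × γ)) (s : ℕ)
    (x1 y1 : α) (x2 y2 : β) (x3 y3 : γ) : Prop :=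
  x1 ≠ y1 ∧ x2 ≠ y2 ∧ x3 ≠ y3 ∧
  H.filter (fun e => e.1 = x1 ∨ e.1 = y1 ∨ e.2.1 = x2 ∨ e.2.1 = y2 ∨
      e.2.2 = x3 ∨ e.2.2 = y3)
    = s • fanoEdges x1 y1 x2 y2 x3 y3

/-!
Among the maximum matchings choose one in which as many edges as possible can be completed to
vertex-disjoint truncated Fano planes of `H`. This gives a matching `M` and a set `B` of planes, all
vertex-disjoint, with `|M| + |B| = ν(H)` and `|B|` maximal. A truncated Fano plane has an edge
avoiding any given edge other than its own four, so a set of edges outside the packing can replace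
edges of `M` as long as it leaves an edge of every plane free.

Give each edge 2 for every vertex on `M`, 1 for every vertex on `B`, and 1 for belonging to a plane
of `B`. By maximality of `ν(H)` only an edge with exactly one vertex on `M` and at most one on `B`
can have a total less than 4; it is private to the edge `m` of `M` that it meets. Exchange arguments
show that the private edges of `m` agree so much (up to identifying the two vertices of a plane in a
class) that the missing charge is covered by the degrees of two vertices, hence is at most `2r` for
each `m`; the only exception, `m` spanning a new plane with its private edges, contradicts the
choice of `B`.

With `n` vertices in each class, the charge of all edges is thus at most `8r` for each `m`, and `6r`
plus the number of its edges for each plane. A plane has at most `2r` edges, with equality only for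
components `(r/2)·F`, and the edges of `M` have charge at least 5, so
`4rn + ν(H) ≤ 8r·ν(H) + #components`.
-/

section Packings

open Finset

lemma sum_map_ite_eq_countP {α : Type*} (s : Multiset α) (P : α → Prop) [DecidablePred P] :
    (s.map fun a ↦ if P a then 1 else 0).sum = s.countP P := by
  induction s using Multiset.induction_on with
  | empty => simp
  | cons a s ih => by_cases h : P a <;> simp [h, ih, add_comm]

lemma countP_mem_eq_sum_count {α : Type*} [DecidableEq α] (s : Multiset α) (S : Finset α) :
    s.countP (· ∈ S) = ∑ a ∈ S, s.count a := by
  calc s.countP (· ∈ S) = (s.map fun b ↦ ∑ a ∈ S, if a = b then 1 else 0).sum := by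
        simp only [sum_ite_eq', sum_map_ite_eq_countP]
    _ = ∑ a ∈ S, s.count a := by
        simp only [Multiset.sum_map_sum, sum_map_ite_eq_countP, Multiset.count]

/-- An edge of a 3-partite 3-graph whose vertex classes are three copies of `V`, listed by its
vertex in each class. -/
abbrev Edge (V : Type*) := Fin 3 → V

/-- Two edges are vertex-disjoint. -/
def Apart {V : Type*} (e f : Edge V) : Prop := ∀ i, e i ≠ f i

/-- A placement of the truncated Fano plane, with classes `{x i, y i}`; its edges are obtained from
`x 0, x 1, x 2` by exchanging `x` for `y` in an even number of classes. -/
structure Plane (V : Type*) where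
  x : Edge V
  y : Edge V
  apart : Apart x y
deriving DecidableEq

/-- A matching in a 3-partite 3-graph given as a multiset of edges. -/
structure IsEdgeMatching {V : Type*} (H : Multiset (Edge V)) (M : Finset (Edge V)) : Prop where
  mem : ∀ e ∈ M, e ∈ H
  apart : (M : Set (Edge V)).Pairwise Apart

variable {V : Type*}

lemma Apart.symm {e f : Edge V} (h : Apart e f) : Apart f e := fun i ↦ (h i).symm

lemma not_apart_self (e : Edge V) : ¬ Apart e e := fun h ↦ h 0 rfl

lemma IsEdgeMatching.subset {H : Multiset (Edge V)} {M N : Finset (Edge V)}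
    (hM : IsEdgeMatching H M) (hNM : N ⊆ M) : IsEdgeMatching H N :=
  ⟨fun e he ↦ hM.mem e (hNM he), hM.apart.mono (coe_subset.2 hNM)⟩

namespace Plane

lemma x_ne_update (p : Plane V) (i : Fin 3) : p.x ≠ Function.update p.y i (p.x i) := fun h ↦ by
  obtain ⟨j, hj⟩ := exists_ne i
  exact p.apart j (by simpa [hj] using congr_fun h j)

lemma update_ne_update (p : Plane V) {i j : Fin 3} (hij : i ≠ j) :
    Function.update p.y i (p.x i) ≠ Function.update p.y j (p.x j) := fun h ↦
  p.apart i (by simpa [hij] using congr_fun h i)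

end Plane

variable [DecidableEq V]

namespace Plane

/-- The two vertices of a truncated Fano plane in class `i`. -/
def verts (p : Plane V) (i : Fin 3) : Finset V := {p.x i, p.y i}

/-- The four edges of a truncated Fano plane. -/
def edges (p : Plane V) : Finset (Edge V) :=
  insert p.x (univ.image fun i ↦ Function.update p.y i (p.x i))

variable {p : Plane V} {e f : Edge V}

lemma card_verts (p : Plane V) (i : Fin 3) : #(p.verts i) = 2 := card_pair (p.apart i)

lemma mem_verts {i : Fin 3} {v : V} : v ∈ p.verts i ↔ v = p.x i ∨ v = p.y i := by
  simp [verts]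

lemma mem_edges : e ∈ p.edges ↔ e = p.x ∨ ∃ i, e = Function.update p.y i (p.x i) := by
  simp [edges, eq_comm]

lemma edges_val (p : Plane V) : p.edges.val =
    p.x ::ₘ (univ : Finset (Fin 3)).val.map fun i ↦ Function.update p.y i (p.x i) := by
  have hinj : Set.InjOn (fun i ↦ Function.update p.y i (p.x i)) (univ : Finset (Fin 3)) :=
    fun i _ j _ h ↦ by_contra fun hij ↦ p.update_ne_update hij h
  rw [edges, insert_val_of_notMem, image_val_of_injOn hinj]
  simpa [eq_comm] using p.x_ne_update

lemma x_mem_edges (p : Plane V) : p.x ∈ p.edges := mem_edges.2 (.inl rfl)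

lemma update_mem_edges (p : Plane V) (i : Fin 3) :
    Function.update p.y i (p.x i) ∈ p.edges := mem_edges.2 (.inr ⟨i, rfl⟩)

lemma mem_verts_of_mem_edges (he : e ∈ p.edges) (i : Fin 3) : e i ∈ p.verts i := by
  obtain rfl | ⟨j, rfl⟩ := mem_edges.1 he
  · exact mem_verts.2 (.inl rfl)
  · by_cases h : i = j
    · subst h; simp [mem_verts]
    · simp [mem_verts, h]

lemma exists_edge_apart (he : e ∉ p.edges) : ∃ g ∈ p.edges, Apart g e := by
  by_contra! hmeets
  have hx : ∃ i, p.x i = e i := by simpa [Apart] using hmeets p.x p.x_mem_edges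
  obtain ⟨i, hi⟩ := hx
  -- The edge through `x k` and the other `y`s misses `e i`, so it meets `e` in another class.
  have hupdate {j k : Fin 3} (hij : i ≠ j) (hik : i ≠ k) (hjk : j ≠ k) :
      p.y j = e j ∨ p.x k = e k := by
    obtain ⟨t, ht⟩ : ∃ t, Function.update p.y k (p.x k) t = e t := by
      simpa [Apart] using hmeets _ (p.update_mem_edges k)
    obtain rfl | rfl | rfl : t = i ∨ t = j ∨ t = k := by omega
    · exact absurd (hi.trans ht.symm) (by simpa [hik] using p.apart t)
    · exact .inl (by simpa [hjk] using ht)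
    · exact .inr (by simpa using ht)
  obtain ⟨j, k, hij, hik, hjk⟩ : ∃ j k : Fin 3, i ≠ j ∧ i ≠ k ∧ j ≠ k := by
    clear hi hupdate; revert i; decide
  have cover : ∀ t, t = i ∨ t = j ∨ t = k := by omega
  have hj := p.apart j
  have hk := p.apart k
  refine he (mem_edges.2 ?_)
  obtain ⟨hj, hk⟩ | ⟨hj, hk⟩ : (p.x j = e j ∧ p.x k = e k) ∨ (p.y j = e j ∧ p.y k = e k) := by
    have := hupdate hij hik hjk
    have := hupdate hik hij hjk.symm
    grind
  · exact .inl (funext fun t ↦ by obtain rfl | rfl | rfl := cover t <;> simp [*])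
  · exact .inr ⟨i, funext fun t ↦ by
      obtain rfl | rfl | rfl := cover t <;> simp [*, hij.symm, hik.symm]⟩

lemma exists_edge_apart_pair (hef : ∀ i, e i ∈ p.verts i → f i ∉ p.verts i) {t : Fin 3}
    (het : e t ∉ p.verts t) (hft : f t ∉ p.verts t) :
    ∃ g ∈ p.edges, Apart g e ∧ Apart g f := by
  -- Glue the vertices of `e` and `f` on `p` into a single edge.
  obtain ⟨g, hg, hgh⟩ := exists_edge_apart (p := p)
    (e := fun i ↦ if e i ∈ p.verts i then e i else f i)
    (fun h ↦ hft (by simpa [het] using mem_verts_of_mem_edges h t))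
  refine ⟨g, hg, fun i hi ↦ hgh i ?_, fun i hi ↦ hgh i ?_⟩ <;> dsimp only
  · rw [if_pos (hi ▸ mem_verts_of_mem_edges hg i), hi]
  · rw [if_neg fun h ↦ hef i h (hi ▸ mem_verts_of_mem_edges hg i), hi]

end Plane

lemma IsEdgeMatching.union {H : Multiset (Edge V)} {M N : Finset (Edge V)}
    (hM : IsEdgeMatching H M) (hN : IsEdgeMatching H N)
    (hMN : ∀ e ∈ M, ∀ f ∈ N, Apart e f) : IsEdgeMatching H (M ∪ N) where
  mem e he := (mem_union.1 he).elim (hM.mem e) (hN.mem e)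
  apart := by
    have : Std.Symm (Apart (V := V)) := ⟨fun _ _ ↦ Apart.symm⟩
    rw [coe_union, Set.pairwise_union_of_symm]
    exact ⟨hM.apart, hN.apart, fun e he f hf _ ↦ hMN e he f hf⟩

lemma card_union_of_apart {M N : Finset (Edge V)} (hMN : ∀ e ∈ M, ∀ f ∈ N, Apart e f) :
    #(M ∪ N) = #M + #N :=
  card_union_of_disjoint <| disjoint_left.2 fun e he hf ↦ not_apart_self e (hMN e he e hf)

/-- A matching `M` of `H` and a family `B` of truncated Fano planes in `H`, all vertex-disjoint. -/
structure IsPacking (H : Multiset (Edge V)) (M : Finset (Edge V)) (B : Finset (Plane V)) :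
    Prop where
  isEdgeMatching : IsEdgeMatching H M
  mem_of_mem_edges : ∀ p ∈ B, ∀ g ∈ p.edges, g ∈ H
  notMem_verts : ∀ p ∈ B, ∀ m ∈ M, ∀ i, m i ∉ p.verts i
  eq_of_mem_verts : ∀ p ∈ B, ∀ q ∈ B, ∀ i, ∀ v ∈ p.verts i, v ∈ q.verts i → p = q

/-- A packing that maximizes, first, the size of the matchings it contains (each plane contributing
one edge) and, second, the number of planes. -/
structure IsOptimal (H : Multiset (Edge V)) (M : Finset (Edge V)) (B : Finset (Plane V)) : Prop
    extends IsPacking H M B where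
  card_matching_le : ∀ N, IsEdgeMatching H N → #N ≤ #M + #B
  card_planes_le : ∀ M' B', IsPacking H M' B' → #M' + #B' = #M + #B → #B' ≤ #B

variable {H : Multiset (Edge V)} {M N Z : Finset (Edge V)} {B : Finset (Plane V)}

namespace IsPacking

lemma subset (hP : IsPacking H M B) (hNM : N ⊆ M) : IsPacking H N B :=
  { hP with
    isEdgeMatching := hP.isEdgeMatching.subset hNM
    notMem_verts := fun p hp m hm ↦ hP.notMem_verts p hp m (hNM hm) }

lemma insert (hP : IsPacking H M B) {p : Plane V} (hp : ∀ g ∈ p.edges, g ∈ H)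
    (hpM : ∀ m ∈ M, ∀ i, m i ∉ p.verts i)
    (hpB : ∀ q ∈ B, ∀ i, ∀ v ∈ p.verts i, v ∉ q.verts i) : IsPacking H M (insert p B) where
  isEdgeMatching := hP.isEdgeMatching
  mem_of_mem_edges := (forall_mem_insert _ _ _).2 ⟨hp, hP.mem_of_mem_edges⟩
  notMem_verts := (forall_mem_insert _ _ _).2 ⟨hpM, hP.notMem_verts⟩
  eq_of_mem_verts := by
    refine (forall_mem_insert _ _ _).2 ⟨(forall_mem_insert _ _ _).2 ⟨fun _ _ _ _ ↦ rfl, ?_⟩,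
      fun q hq ↦ (forall_mem_insert _ _ _).2 ⟨?_, hP.eq_of_mem_verts q hq⟩⟩
    · exact fun q hq i v hv hv' ↦ absurd hv' (hpB q hq i v hv)
    · exact fun i v hv hv' ↦ absurd hv (hpB q hq i v hv')

lemma apart_of_mem_edges (hP : IsPacking H M B) {p q : Plane V} (hp : p ∈ B) (hq : q ∈ B)
    (hpq : p ≠ q) {e f : Edge V} (he : e ∈ p.edges) (hf : f ∈ q.edges) : Apart e f :=
  fun i h ↦ hpq <| hP.eq_of_mem_verts p hp q hq i _ (Plane.mem_verts_of_mem_edges he i)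
    (h ▸ Plane.mem_verts_of_mem_edges hf i)

lemma isEdgeMatching_image (hP : IsPacking H M B) {g : Plane V → Edge V}
    (hg : ∀ p ∈ B, g p ∈ p.edges) : IsEdgeMatching H (B.image g) where
  mem := forall_mem_image.2 fun p hp ↦ hP.mem_of_mem_edges p hp _ (hg p hp)
  apart := by
    rw [coe_image]
    rintro _ ⟨p, hp, rfl⟩ _ ⟨q, hq, rfl⟩ hpq
    exact hP.apart_of_mem_edges hp hq (fun h ↦ hpq (h ▸ rfl)) (hg p hp) (hg q hq)

lemma injOn_of_mem_edges (hP : IsPacking H M B) {g : Plane V → Edge V}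
    (hg : ∀ p ∈ B, g p ∈ p.edges) : Set.InjOn g B := fun p hp q hq h ↦ by
  by_contra hpq
  exact not_apart_self (g p)
    (hP.apart_of_mem_edges hp hq hpq (hg p hp) (h ▸ hg q hq))

lemma exists_isEdgeMatching (hP : IsPacking H M B) (hNM : N ⊆ M) (hZ : IsEdgeMatching H Z)
    (hZN : ∀ z ∈ Z, ∀ m ∈ N, Apart z m)
    (hZB : ∀ p ∈ B, ∃ g ∈ p.edges, ∀ z ∈ Z, Apart z g) :
    ∃ K, IsEdgeMatching H K ∧ #K = #Z + #N + #B := by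
  have hchoice (p : Plane V) : ∃ g : Edge V, p ∈ B → g ∈ p.edges ∧ ∀ z ∈ Z, Apart z g :=
    if hp : p ∈ B then (hZB p hp).imp fun _ h _ ↦ h else ⟨p.x, fun h ↦ absurd h hp⟩
  choose g hgB using hchoice
  have hg : ∀ p ∈ B, g p ∈ p.edges := fun p hp ↦ (hgB p hp).1
  have hNg : ∀ m ∈ N, ∀ f ∈ B.image g, Apart m f := by
    refine fun m hm ↦ forall_mem_image.2 fun p hp i h ↦ hP.notMem_verts p hp m (hNM hm) i ?_
    exact h ▸ Plane.mem_verts_of_mem_edges (hg p hp) i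
  have hNB := (hP.isEdgeMatching.subset hNM).union (hP.isEdgeMatching_image hg) hNg
  have hZNB : ∀ z ∈ Z, ∀ f ∈ N ∪ B.image g, Apart z f := fun z hz ↦
    forall_mem_union.2 ⟨hZN z hz, forall_mem_image.2 fun p hp ↦ (hgB p hp).2 z hz⟩
  refine ⟨_, hZ.union hNB hZNB, ?_⟩
  rw [card_union_of_apart hZNB, card_union_of_apart hNg,
    card_image_of_injOn (hP.injOn_of_mem_edges hg), add_assoc]

end IsPacking

lemma IsOptimal.card_exchange_le (hO : IsOptimal H M B) (hNM : N ⊆ M) (hZ : IsEdgeMatching H Z)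
    (hZN : ∀ z ∈ Z, ∀ m ∈ N, Apart z m)
    (hZB : ∀ p ∈ B, ∃ g ∈ p.edges, ∀ z ∈ Z, Apart z g) : #Z + #N ≤ #M := by
  obtain ⟨K, hK, hcard⟩ := hO.exists_isEdgeMatching hNM hZ hZN hZB
  have := hO.card_matching_le K hK
  omega

lemma IsOptimal.exists_mem_edges_of_apart (hO : IsOptimal H M B) {e : Edge V} (he : e ∈ H)
    (heM : ∀ m ∈ M, Apart e m) : ∃ p ∈ B, e ∈ p.edges := by
  by_contra! hB
  have hle := hO.card_exchange_le (Z := {e}) subset_rfl ⟨by simpa, by simp⟩ (by simpa)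
    fun p hp ↦ by
      obtain ⟨g, hg, hge⟩ := Plane.exists_edge_apart (hB p hp)
      exact ⟨g, hg, by simpa using hge.symm⟩
  simp at hle

lemma exists_isOptimal {ν : ℕ} (hν : IsGreatest {k | ∃ M, IsEdgeMatching H M ∧ #M = k} ν) :
    ∃ M B, IsOptimal H M B ∧ #M + #B = ν := by
  obtain ⟨⟨M₀, hM₀, hcard₀⟩, hle⟩ := hν
  let S : Set ℕ := {b | ∃ M B, IsPacking H M B ∧ #M + #B = ν ∧ #B = b}
  have hS : BddAbove S := ⟨ν, by rintro _ ⟨M, B, -, h, rfl⟩; omega⟩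
  obtain ⟨M, B, hP, hcard, hB⟩ := Nat.sSup_mem (s := S)
    ⟨0, M₀, ∅, ⟨hM₀, by simp, by simp, by simp⟩, by simpa, rfl⟩ hS
  exact ⟨M, B, ⟨hP, fun N hN ↦ hcard ▸ hle ⟨N, hN, rfl⟩, fun M' B' hP' h ↦
    hB ▸ le_csSup hS ⟨M', B', hP', h.trans hcard, rfl⟩⟩, hcard⟩

/-- The vertices of a matching in each class. -/
def matchVerts (M : Finset (Edge V)) (i : Fin 3) : Finset V := M.image (· i)

/-- The vertices of a family of truncated Fano planes in each class. -/
def planeVerts (B : Finset (Plane V)) (i : Fin 3) : Finset V := B.biUnion (·.verts i)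

/-- The classes in which an edge meets the vertex set `S`. -/
def hits (S : Fin 3 → Finset V) (e : Edge V) : Finset (Fin 3) := {i | e i ∈ S i}

/-- The vertex of `m` in class `i` is the only vertex of `M` on the edge `e` of `H`, and `e` has at
most one vertex on the planes of `B`; the edges that can be exchanged for `m`. -/
structure IsPrivate (H : Multiset (Edge V)) (M : Finset (Edge V)) (B : Finset (Plane V))
    (m : Edge V) (i : Fin 3) (e : Edge V) : Prop where
  mem : e ∈ H
  eq : e i = m i
  hits_matchVerts : hits (matchVerts M) e = {i}
  card_hits_planeVerts : #(hits (planeVerts B) e) ≤ 1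

/-- Two vertices of class `l` are linked if they become equal when the two vertices in class `l` of
each plane of `B` are identified. -/
def Linked (B : Finset (Plane V)) (l : Fin 3) (u v : V) : Prop :=
  u = v ∨ ∃ p ∈ B, u ∈ p.verts l ∧ v ∈ p.verts l

variable {m e f : Edge V} {i j l t : Fin 3} {p q : Plane V}

lemma mem_hits {S : Fin 3 → Finset V} : i ∈ hits S e ↔ e i ∈ S i := by simp [hits]

lemma mem_matchVerts {v : V} : v ∈ matchVerts M i ↔ ∃ m ∈ M, m i = v := by simp [matchVerts]

lemma mem_planeVerts {v : V} : v ∈ planeVerts B i ↔ ∃ p ∈ B, v ∈ p.verts i := by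
  simp [planeVerts]

namespace IsPrivate

lemma ne_of_ne (he : IsPrivate H M B m i e) (hl : l ≠ i) {n : Edge V} (hn : n ∈ M) :
    e l ≠ n l := fun h ↦ by
  have hmem : l ∈ hits (matchVerts M) e := mem_hits.2 (mem_matchVerts.2 ⟨n, hn, h.symm⟩)
  rw [he.hits_matchVerts, mem_singleton] at hmem
  exact hl hmem

lemma eq_of_mem_verts (he : IsPrivate H M B m i e) (hp : p ∈ B) (hq : q ∈ B)
    (hl : e l ∈ p.verts l) (ht : e t ∈ q.verts t) : l = t :=
  card_le_one.1 he.card_hits_planeVerts _ (mem_hits.2 (mem_planeVerts.2 ⟨p, hp, hl⟩)) _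
    (mem_hits.2 (mem_planeVerts.2 ⟨q, hq, ht⟩))

lemma notMem_verts (he : IsPrivate H M B m i e) (hP : IsPacking H M B) (hm : m ∈ M)
    (hp : p ∈ B) : e i ∉ p.verts i :=
  he.eq ▸ hP.notMem_verts p hp m hm i

lemma apart_of_mem_erase (he : IsPrivate H M B m i e) (hP : IsPacking H M B) (hm : m ∈ M)
    {n : Edge V} (hn : n ∈ M.erase m) : Apart e n := fun l ↦ by
  obtain ⟨hnm, hnM⟩ := mem_erase.1 hn
  by_cases hl : l = i
  · subst hl
    exact he.eq ▸ hP.isEdgeMatching.apart hm hnM hnm.symm l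
  · exact he.ne_of_ne hl hnM

lemma apart_of_ne (he : IsPrivate H M B m i e) (hf : IsPrivate H M B m j f) (hm : m ∈ M)
    (hij : i ≠ j) (hil : i ≠ l) (hjl : j ≠ l) (hne : e l ≠ f l) : Apart e f := fun t ↦ by
  obtain rfl | rfl | rfl : t = i ∨ t = j ∨ t = l := by omega
  · exact he.eq ▸ (hf.ne_of_ne hij hm).symm
  · exact hf.eq ▸ he.ne_of_ne hij.symm hm
  · exact hne

lemma exists_edge_apart_pair (he : IsPrivate H M B m i e) (hf : IsPrivate H M B m j f)
    (hP : IsPacking H M B) (hm : m ∈ M) (hij : i ≠ j) (hil : i ≠ l) (hjl : j ≠ l)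
    (hp : p ∈ B) (hl : e l ∈ p.verts l → f l ∉ p.verts l) :
    ∃ g ∈ p.edges, Apart g e ∧ Apart g f := by
  have hei := he.notMem_verts hP hm hp
  have hfj := hf.notMem_verts hP hm hp
  have hef (t : Fin 3) : e t ∈ p.verts t → f t ∉ p.verts t := by
    obtain rfl | rfl | rfl : t = i ∨ t = j ∨ t = l := by omega
    · exact fun h ↦ absurd h hei
    · exact fun _ ↦ hfj
    · exact hl
  by_cases hel : e l ∈ p.verts l
  · exact Plane.exists_edge_apart_pair hef (fun h ↦ hjl (he.eq_of_mem_verts hp hp h hel)) hfj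
  by_cases hfl : f l ∈ p.verts l
  · exact Plane.exists_edge_apart_pair hef hei (fun h ↦ hil (hf.eq_of_mem_verts hp hp h hfl))
  · exact Plane.exists_edge_apart_pair hef hel hfl

end IsPrivate

lemma Linked.eq {u v : V} (h : Linked B l u v) (hv : ∀ p ∈ B, v ∉ p.verts l) : u = v :=
  h.resolve_right fun ⟨p, hp, _, hv'⟩ ↦ hv p hp hv'

lemma IsPacking.mem_verts_of_linked (hP : IsPacking H M B) {u v : V} (h : Linked B l u v)
    (hp : p ∈ B) (hv : v ∈ p.verts l) : u ∈ p.verts l := by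
  obtain rfl | ⟨q, hq, hu, hv'⟩ := h
  · exact hv
  · exact hP.eq_of_mem_verts q hq p hp l v hv' hv ▸ hu

lemma IsPacking.linked_trans (hP : IsPacking H M B) {u v z : V} (huv : Linked B l u v)
    (hvz : Linked B l v z) : Linked B l u z := by
  obtain rfl | ⟨p, hp, hv, hz⟩ := hvz
  · exact huv
  · exact .inr ⟨p, hp, hP.mem_verts_of_linked huv hp hv, hz⟩

namespace IsOptimal

-- Otherwise `m` can be exchanged for the two edges `e` and `f`.
lemma linked_of_isPrivate (hO : IsOptimal H M B) (hm : m ∈ M) (hij : i ≠ j) (hil : i ≠ l)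
    (hjl : j ≠ l) (he : IsPrivate H M B m i e) (hf : IsPrivate H M B m j f) :
    Linked B l (e l) (f l) := by
  by_contra hlink
  have hef : Apart e f := he.apart_of_ne hf hm hij hil hjl fun h ↦ hlink (.inl h)
  have hZ : IsEdgeMatching H {e, f} :=
    ⟨by simp [he.mem, hf.mem], by
      have : Std.Symm (Apart (V := V)) := ⟨fun _ _ ↦ Apart.symm⟩
      rw [coe_pair]
      exact Set.pairwise_pair_of_symm.2 fun _ ↦ hef⟩
  have hle := hO.card_exchange_le (N := M.erase m) (erase_subset m M) hZ
    (by
      simp only [mem_insert, mem_singleton, forall_eq_or_imp, forall_eq]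
      exact ⟨fun n ↦ he.apart_of_mem_erase hO.toIsPacking hm,
        fun n ↦ hf.apart_of_mem_erase hO.toIsPacking hm⟩)
    (fun p hp ↦ by
      obtain ⟨g, hg, hge, hgf⟩ := he.exists_edge_apart_pair hf hO.toIsPacking hm hij hil hjl hp
        fun hel hfl ↦ hlink (.inr ⟨p, hp, hel, hfl⟩)
      exact ⟨g, hg, by simp [hge.symm, hgf.symm]⟩)
  have hne : e ≠ f := by rintro rfl; exact not_apart_self e hef
  rw [card_pair hne] at hle
  have := card_erase_add_one hm
  omega

lemma linked_of_forall_ne (hO : IsOptimal H M B) (hm : m ∈ M)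
    (hall : ∀ k ≠ l, ∃ g, IsPrivate H M B m k g) (hil : i ≠ l) (hjl : j ≠ l)
    (he : IsPrivate H M B m i e) (hf : IsPrivate H M B m j f) : Linked B l (e l) (f l) := by
  by_cases hij : i = j
  · subst hij
    obtain ⟨k, hik, hkl⟩ : ∃ k : Fin 3, i ≠ k ∧ k ≠ l := by
      clear he hf hall; revert i l; decide
    obtain ⟨g, hg⟩ := hall k hkl
    exact hO.linked_trans (hO.linked_of_isPrivate hm hik hil hkl he hg)
      (hO.linked_of_isPrivate hm hik.symm hkl hjl hg hf)
  · exact hO.linked_of_isPrivate hm hij hil hjl he hf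

lemma exists_linked_of_forall_not_isPrivate (hO : IsOptimal H M B) (hm : m ∈ M)
    (hl : ∀ e, ¬ IsPrivate H M B m l e) :
    ∃ t v, ∀ i e, IsPrivate H M B m i e → Linked B t (e t) v := by
  have hne {i : Fin 3} {e : Edge V} (he : IsPrivate H M B m i e) : i ≠ l := by
    rintro rfl; exact hl e he
  by_cases hall : ∀ k ≠ l, ∃ g, IsPrivate H M B m k g
  · obtain ⟨k, hkl⟩ := exists_ne l
    obtain ⟨g, hg⟩ := hall k hkl
    exact ⟨l, g l, fun i e he ↦ hO.linked_of_forall_ne hm hall (hne he) hkl he hg⟩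
  · push Not at hall
    obtain ⟨k, hkl, hk⟩ := hall
    obtain ⟨t, htk, htl⟩ : ∃ t : Fin 3, t ≠ k ∧ t ≠ l := by
      clear hl hk hne; revert k l; decide
    refine ⟨t, m t, fun i e he ↦ .inl ?_⟩
    have hik : i ≠ k := by rintro rfl; exact hk e he
    have := hne he
    obtain rfl : i = t := by omega
    exact he.eq

-- Otherwise the private edges of `m` form a new plane with `m`, which can replace `m`.
lemma exists_mem_verts_of_forall_isPrivate (hO : IsOptimal H M B) (hm : m ∈ M)
    {e : Fin 3 → Edge V} (he : ∀ i, IsPrivate H M B m i (e i)) :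
    ∃ i l, i ≠ l ∧ ∃ p ∈ B, e i l ∈ p.verts l := by
  by_contra! hno
  have hsucc (l : Fin 3) : l ≠ l + 1 := by revert l; decide
  have hagree {i l : Fin 3} (hil : i ≠ l) : e i l = e (l + 1) l :=
    (hO.linked_of_forall_ne hm (fun k _ ↦ ⟨e k, he k⟩) hil (hsucc l).symm (he i)
      (he (l + 1))).eq (hno _ _ (hsucc l).symm)
  let p : Plane V := ⟨m, fun l ↦ e (l + 1) l, fun l ↦ ((he _).ne_of_ne (hsucc l) hm).symm⟩
  have hp_update (i : Fin 3) : Function.update p.y i (p.x i) = e i := by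
    funext l
    by_cases hli : l = i
    · subst hli; simpa using (he l).eq.symm
    · simpa [hli] using (hagree (Ne.symm hli)).symm
  have hpH : ∀ g ∈ p.edges, g ∈ H := fun g hg ↦ by
    obtain h | ⟨i, h⟩ := Plane.mem_edges.1 hg
    · exact h ▸ hO.isEdgeMatching.mem m hm
    · exact (h.trans (hp_update i)) ▸ (he i).mem
  have hpM : ∀ n ∈ M.erase m, ∀ l, n l ∉ p.verts l := fun n hn l hnl ↦ by
    obtain ⟨hnm, hnM⟩ := mem_erase.1 hn
    obtain h | h := Plane.mem_verts.1 hnl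
    · exact hO.isEdgeMatching.apart hnM hm hnm l h
    · exact (he (l + 1)).ne_of_ne (hsucc l) hnM h.symm
  have hpB : ∀ q ∈ B, ∀ l, ∀ v ∈ p.verts l, v ∉ q.verts l := fun q hq l v hv ↦ by
    obtain h | h := Plane.mem_verts.1 hv
    · exact h ▸ hO.notMem_verts q hq m hm l
    · exact h ▸ hno _ _ (hsucc l).symm q hq
  have hpnot : p ∉ B := fun h ↦ hpB p h 0 _ (Plane.mem_verts.2 (.inl rfl))
    (Plane.mem_verts.2 (.inl rfl))
  have hle := hO.card_planes_le _ _ ((hO.subset (erase_subset m M)).insert hpH hpM hpB)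
  have := card_erase_add_one hm
  rw [card_insert_of_notMem hpnot] at hle
  omega

end IsOptimal

/-- The charge that an edge must still receive from the edge of `M` it is private to. -/
def excess (B : Finset (Plane V)) (e : Edge V) : ℕ := 2 - #(hits (planeVerts B) e)

/-- The excess of the edges private to `m` is bounded by their number of incidences with two
vertices (possibly the same one twice). -/
def IsExcessCovered (H : Multiset (Edge V)) (M : Finset (Edge V)) (B : Finset (Plane V))
    (m : Edge V) : Prop :=
  ∃ l v l' v', ∀ i e, IsPrivate H M B m i e →
    excess B e ≤ (if e l = v then 1 else 0) + (if e l' = v' then 1 else 0)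

lemma excess_le_two (B : Finset (Plane V)) (e : Edge V) : excess B e ≤ 2 := Nat.sub_le _ _

lemma excess_le_one (hp : p ∈ B) (hl : e l ∈ p.verts l) : excess B e ≤ 1 := by
  have hpos : 0 < #(hits (planeVerts B) e) :=
    card_pos.2 ⟨l, mem_hits.2 (mem_planeVerts.2 ⟨p, hp, hl⟩)⟩
  unfold excess
  omega

lemma IsPacking.isExcessCovered_of_linked (hP : IsPacking H M B) {v : V}
    (h : ∀ i e, IsPrivate H M B m i e → Linked B l (e l) v) : IsExcessCovered H M B m := by
  by_cases hv : ∃ p ∈ B, v ∈ p.verts l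
  · obtain ⟨p, hp, hvp⟩ := hv
    refine ⟨l, p.x l, l, p.y l, fun i e he ↦ ?_⟩
    have hel : e l ∈ p.verts l := hP.mem_verts_of_linked (h i e he) hp hvp
    have := excess_le_one hp hel
    obtain hx | hy := Plane.mem_verts.1 hel
    · simp only [if_pos hx]; omega
    · simp only [if_pos hy]; omega
  · push Not at hv
    refine ⟨l, v, l, v, fun i e he ↦ ?_⟩
    simpa [(h i e he).eq hv] using excess_le_two B e

lemma IsOptimal.isExcessCovered_of_mem_verts (hO : IsOptimal H M B) (hm : m ∈ M)
    (hall : ∀ i, ∃ e, IsPrivate H M B m i e) (he : IsPrivate H M B m i e) (hil : i ≠ l)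
    (hp : p ∈ B) (hel : e l ∈ p.verts l) : IsExcessCovered H M B m := by
  obtain ⟨k, hki, hkl⟩ : ∃ k : Fin 3, k ≠ i ∧ k ≠ l := by
    clear he hel; revert i l; decide
  obtain ⟨f, hf⟩ := hall k
  have hlink {j j' t : Fin 3} {g g' : Edge V} (hg : IsPrivate H M B m j g)
      (hg' : IsPrivate H M B m j' g') (hj : j ≠ t) (hj' : j' ≠ t) : Linked B t (g t) (g' t) :=
    hO.linked_of_forall_ne hm (fun t _ ↦ hall t) hj hj' hg hg'
  have hmem {j : Fin 3} {g : Edge V} (hg : IsPrivate H M B m j g) (hjl : j ≠ l) :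
      g l ∈ p.verts l := hO.mem_verts_of_linked (hlink hg he hjl hil) hp hel
  have hgi {j : Fin 3} {g : Edge V} (hg : IsPrivate H M B m j g) (hji : j ≠ i) : g i = f i :=
    (hlink hg hf hji hki).eq fun q hq h ↦ hil (hf.eq_of_mem_verts hq hp h (hmem hf hkl))
  have hgk {j : Fin 3} {g : Edge V} (hg : IsPrivate H M B m j g) (hjk : j ≠ k) : g k = e k :=
    (hlink hg he hjk hki.symm).eq fun q hq h ↦ hkl (he.eq_of_mem_verts hq hp h hel)
  refine ⟨i, f i, k, e k, fun j g hg ↦ ?_⟩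
  by_cases hjl : j = l
  · subst hjl
    simpa [hgi hg hil.symm, hgk hg hkl.symm] using excess_le_two B g
  have hexcess := excess_le_one hp (hmem hg hjl)
  by_cases hji : j = i
  · subst hji
    simp only [hgk hg hki.symm, if_true]
    omega
  · simp only [hgi hg hji, if_true]
    omega

lemma IsOptimal.isExcessCovered (hO : IsOptimal H M B) (hm : m ∈ M) :
    IsExcessCovered H M B m := by
  by_cases hall : ∀ i, ∃ e, IsPrivate H M B m i e
  · choose e he using hall
    obtain ⟨i, l, hil, p, hp, hel⟩ := hO.exists_mem_verts_of_forall_isPrivate hm he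
    exact hO.isExcessCovered_of_mem_verts hm (fun j ↦ ⟨e j, he j⟩) (he i) hil hp hel
  · push Not at hall
    obtain ⟨l, hl⟩ := hall
    obtain ⟨t, v, h⟩ := hO.exists_linked_of_forall_not_isPrivate hm hl
    exact hO.isExcessCovered_of_linked h

open Classical in
/-- The charge that the edge `m` of `M` sends to the edge `e`. -/
noncomputable def bonus (H : Multiset (Edge V)) (M : Finset (Edge V)) (B : Finset (Plane V))
    (m e : Edge V) : ℕ :=
  if ∃ i, IsPrivate H M B m i e then excess B e else 0

lemma IsPrivate.excess_le_sum_bonus (he : IsPrivate H M B m i e) (hm : m ∈ M) :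
    excess B e ≤ ∑ n ∈ M, bonus H M B n e := by
  have hbonus : bonus H M B m e = excess B e := if_pos ⟨i, he⟩
  exact hbonus ▸ single_le_sum (f := fun n ↦ bonus H M B n e) (fun _ _ ↦ Nat.zero_le _) hm

lemma exists_isPrivate (he : e ∈ H) (hM : #(hits (matchVerts M) e) = 1)
    (hB : #(hits (planeVerts B) e) ≤ 1) : ∃ m ∈ M, ∃ i, IsPrivate H M B m i e := by
  obtain ⟨i, hi⟩ := card_eq_one.1 hM
  obtain ⟨m, hm, hmi⟩ := mem_matchVerts.1 (mem_hits.1 (hi ▸ mem_singleton_self i))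
  exact ⟨m, hm, i, he, hmi.symm, hi, hB⟩

lemma hits_eq_univ {S : Fin 3 → Finset V} (h : ∀ i, e i ∈ S i) : hits S e = univ :=
  eq_univ_of_forall fun i ↦ mem_hits.2 (h i)

lemma IsOptimal.le_charge (hO : IsOptimal H M B) (he : e ∈ H) :
    4 + (if e ∈ M then 1 else 0) ≤ 2 * #(hits (matchVerts M) e) + #(hits (planeVerts B) e) +
      ∑ m ∈ M, bonus H M B m e + ∑ p ∈ B, if e ∈ p.edges then 1 else 0 := by
  by_cases heM : e ∈ M
  · have hall : #(hits (matchVerts M) e) = 3 := by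
      rw [hits_eq_univ fun i ↦ mem_matchVerts.2 ⟨e, heM, rfl⟩, card_univ, Fintype.card_fin]
    rw [if_pos heM]
    omega
  rw [if_neg heM]
  obtain h | h | h : #(hits (matchVerts M) e) = 0 ∨ #(hits (matchVerts M) e) = 1 ∨
      2 ≤ #(hits (matchVerts M) e) := by omega
  · have hapart : ∀ m ∈ M, Apart e m := fun m hm i hi ↦ by
      have hmem : i ∈ hits (matchVerts M) e := mem_hits.2 (mem_matchVerts.2 ⟨m, hm, hi.symm⟩)
      simp [card_eq_zero.1 h] at hmem
    obtain ⟨p, hp, hep⟩ := hO.exists_mem_edges_of_apart he hapart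
    have hall : #(hits (planeVerts B) e) = 3 := by
      rw [hits_eq_univ fun i ↦ mem_planeVerts.2 ⟨p, hp, Plane.mem_verts_of_mem_edges hep i⟩,
        card_univ, Fintype.card_fin]
    have hedge : 1 ≤ ∑ p ∈ B, if e ∈ p.edges then 1 else 0 := by
      simpa [hep] using single_le_sum (f := fun p : Plane V ↦ if e ∈ p.edges then 1 else 0)
        (fun _ _ ↦ Nat.zero_le _) hp
    omega
  · by_cases hB : #(hits (planeVerts B) e) ≤ 1
    · obtain ⟨m, hm, i, hprivate⟩ := exists_isPrivate he h hB
      have := hprivate.excess_le_sum_bonus hm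
      unfold excess at this
      omega
    · omega
  · omega

/-- Every vertex of the 3-partite 3-graph `H` has degree `r`. -/
def IsEdgeRegular (H : Multiset (Edge V)) (r : ℕ) : Prop :=
  ∀ i v, H.countP (fun e ↦ e i = v) = r

lemma card_le_countP_mem (hM : IsEdgeMatching H M) : #M ≤ H.countP (· ∈ M) := by
  rw [Multiset.countP_eq_card_filter]
  exact Multiset.card_le_card (Multiset.le_filter.2
    ⟨(Multiset.le_iff_subset M.nodup).2 fun e he ↦ hM.mem e he, fun e he ↦ he⟩)

lemma card_matchVerts_le (M : Finset (Edge V)) (i : Fin 3) : #(matchVerts M i) ≤ #M :=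
  card_image_le

lemma card_planeVerts_le (B : Finset (Plane V)) (i : Fin 3) : #(planeVerts B i) ≤ #B * 2 :=
  card_biUnion_le_card_mul _ _ _ fun p _ ↦ (p.card_verts i).le

namespace IsEdgeRegular

variable {r : ℕ}

lemma countP_mem (hreg : IsEdgeRegular H r) (i : Fin 3) (S : Finset V) :
    H.countP (fun e ↦ e i ∈ S) = r * #S := by
  have hcount (v : V) : (H.map (· i)).count v = r := by
    rw [← hreg i v, Multiset.count, Multiset.countP_map, Multiset.countP_eq_card_filter]
    simp only [eq_comm]
  have hsum := countP_mem_eq_sum_count (H.map (· i)) S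
  rw [Multiset.countP_map, ← Multiset.countP_eq_card_filter] at hsum
  simp [hsum, hcount, mul_comm]

lemma card_eq [Fintype V] (hreg : IsEdgeRegular H r) : H.card = r * Fintype.card V := by
  simpa using hreg.countP_mem 0 univ

lemma sum_card_hits (hreg : IsEdgeRegular H r) (S : Fin 3 → Finset V) :
    (H.map fun e ↦ #(hits S e)).sum = r * ∑ i, #(S i) := by
  simp only [hits, card_filter, Multiset.sum_map_sum, sum_map_ite_eq_countP, hreg.countP_mem,
    mul_sum]

lemma sum_bonus_le (hreg : IsEdgeRegular H r) (hm : IsExcessCovered H M B m) :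
    (H.map (bonus H M B m)).sum ≤ 2 * r := by
  obtain ⟨l, v, l', v', h⟩ := hm
  calc (H.map (bonus H M B m)).sum
      ≤ (H.map fun e ↦ (if e l = v then 1 else 0) + if e l' = v' then 1 else 0).sum := by
        refine Multiset.sum_map_le_sum_map _ _ fun e _ ↦ ?_
        by_cases he : ∃ i, IsPrivate H M B m i e
        · exact (if_pos he).trans_le (he.elim fun i he ↦ h i e he)
        · exact (if_neg he).trans_le (Nat.zero_le _)
    _ = 2 * r := by
        rw [Multiset.sum_map_add, sum_map_ite_eq_countP, sum_map_ite_eq_countP, hreg, hreg, two_mul]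

lemma four_mul_add_le [Fintype V] (hreg : IsEdgeRegular H r) (hO : IsOptimal H M B) :
    4 * (r * Fintype.card V) + #M ≤
      8 * (r * #M) + 6 * (r * #B) + ∑ p ∈ B, H.countP (· ∈ p.edges) := by
  have hcharge := Multiset.sum_map_le_sum_map _ _ fun e he ↦ hO.le_charge (e := e) he
  simp only [Multiset.sum_map_add, Multiset.sum_map_mul_left, Multiset.sum_map_sum,
    sum_map_ite_eq_countP, hreg.sum_card_hits, Multiset.map_const', Multiset.sum_replicate,
    hreg.card_eq, smul_eq_mul] at hcharge
  have hM := card_le_countP_mem hO.isEdgeMatching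
  have hmatch : ∑ i, #(matchVerts M i) ≤ 3 * #M := by
    simpa using sum_le_card_nsmul univ _ _ fun i _ ↦ card_matchVerts_le M i
  have hplane : ∑ i, #(planeVerts B i) ≤ 3 * (#B * 2) := by
    simpa using sum_le_card_nsmul univ _ _ fun i _ ↦ card_planeVerts_le B i
  have hbonus : ∑ m ∈ M, (H.map (bonus H M B m)).sum ≤ #M * (2 * r) := by
    simpa using sum_le_card_nsmul M _ _ fun m hm ↦ hreg.sum_bonus_le (hO.isExcessCovered hm)
  have := Nat.mul_le_mul_left r hmatch
  have := Nat.mul_le_mul_left r hplane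
  linarith

end IsEdgeRegular

namespace Plane

lemma apply_eq_x_iff (he : e ∈ p.edges) :
    e i = p.x i ↔ e = p.x ∨ e = Function.update p.y i (p.x i) := by
  refine ⟨fun h ↦ ?_, by rintro (rfl | rfl) <;> simp⟩
  refine (mem_edges.1 he).imp_right ?_
  rintro ⟨j, rfl⟩
  obtain rfl : i = j := by
    by_contra hij
    exact p.apart i (by simpa [hij] using h.symm)
  rfl

lemma apply_eq_y_iff (he : e ∈ p.edges) (hij : i ≠ j) (hil : i ≠ l) (hjl : j ≠ l) :
    e i = p.y i ↔ e = Function.update p.y j (p.x j) ∨ e = Function.update p.y l (p.x l) := by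
  refine ⟨fun h ↦ ?_, by rintro (rfl | rfl) <;> simp [hij, hil]⟩
  obtain rfl | ⟨t, rfl⟩ := mem_edges.1 he
  · exact absurd h (p.apart i)
  obtain rfl | rfl | rfl : t = i ∨ t = j ∨ t = l := by omega
  · exact absurd (by simpa using h) (p.apart t)
  · exact .inl rfl
  · exact .inr rfl

/-- The plane `p` is a connected component of `H`, with each of its edges of multiplicity `s`. -/
def IsComponent (H : Multiset (Edge V)) (s : ℕ) (p : Plane V) : Prop :=
  H.filter (fun e ↦ ∃ i, e i ∈ p.verts i) = s • p.edges.val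

end Plane

namespace IsEdgeRegular

variable {r : ℕ}

lemma countP_mem_verts (hreg : IsEdgeRegular H r) (p : Plane V) (i : Fin 3) :
    H.countP (fun e ↦ e i ∈ p.verts i) = 2 * r := by
  rw [hreg.countP_mem, p.card_verts, mul_comm]

lemma countP_mem_edges_le (hreg : IsEdgeRegular H r) (p : Plane V) :
    H.countP (· ∈ p.edges) ≤ 2 * r := by
  rw [← hreg.countP_mem_verts p 0, Multiset.countP_eq_card_filter,
    Multiset.countP_eq_card_filter]
  exact Multiset.card_le_card (Multiset.monotone_filter_right H fun e he ↦
    Plane.mem_verts_of_mem_edges he 0)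

lemma mem_edges_of_mem_verts (hreg : IsEdgeRegular H r) (hp : 2 * r ≤ H.countP (· ∈ p.edges))
    (he : e ∈ H) (hi : e i ∈ p.verts i) : e ∈ p.edges := by
  have hfilter : H.filter (· ∈ p.edges) = H.filter fun e ↦ e i ∈ p.verts i := by
    refine Multiset.eq_of_le_of_card_le
      (Multiset.monotone_filter_right H fun g hg ↦ Plane.mem_verts_of_mem_edges hg i) ?_
    rwa [← Multiset.countP_eq_card_filter, ← Multiset.countP_eq_card_filter,
      hreg.countP_mem_verts]
  exact Multiset.of_mem_filter (hfilter ▸ Multiset.mem_filter.2 ⟨he, hi⟩ :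
    e ∈ H.filter (· ∈ p.edges))

lemma count_add_count_eq (hreg : IsEdgeRegular H r) (hp : 2 * r ≤ H.countP (· ∈ p.edges)) {v : V}
    (hv : v ∈ p.verts i) (he : e ∈ p.edges) (hf : f ∈ p.edges) (hef : e ≠ f)
    (h : ∀ g ∈ p.edges, g i = v ↔ g = e ∨ g = f) :
    H.count e + H.count f = r := by
  rw [← sum_pair (f := H.count) hef, ← countP_mem_eq_sum_count, ← hreg i v]
  refine Multiset.countP_congr rfl fun g hg ↦ propext ?_
  rw [mem_insert, mem_singleton]
  refine ⟨fun hgef ↦ (h g ?_).2 hgef, fun hgv ↦ (h g ?_).1 hgv⟩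
  · obtain rfl | rfl := hgef <;> assumption
  · exact hreg.mem_edges_of_mem_verts hp hg (hgv ▸ hv)

lemma exists_isComponent (hreg : IsEdgeRegular H r) (hp : 2 * r ≤ H.countP (· ∈ p.edges)) :
    ∃ s, 2 * s = r ∧ p.IsComponent H s := by
  have hx (i : Fin 3) : H.count p.x + H.count (Function.update p.y i (p.x i)) = r :=
    hreg.count_add_count_eq hp (Plane.mem_verts.2 (.inl rfl)) p.x_mem_edges
      (p.update_mem_edges i) (p.x_ne_update i) fun _ ↦ Plane.apply_eq_x_iff
  have hy : H.count (Function.update p.y 1 (p.x 1)) + H.count (Function.update p.y 2 (p.x 2)) = r :=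
    hreg.count_add_count_eq (i := 0) hp (Plane.mem_verts.2 (.inr rfl))
      (p.update_mem_edges 1) (p.update_mem_edges 2) (p.update_ne_update (by decide)) fun _ hg ↦
        Plane.apply_eq_y_iff hg (by decide) (by decide) (by decide)
  have hcount : ∀ g ∈ p.edges, H.count g = H.count p.x := fun g hg ↦ by
    have := hx 1
    have := hx 2
    obtain rfl | ⟨i, rfl⟩ := Plane.mem_edges.1 hg
    · rfl
    · have := hx i
      omega
  refine ⟨H.count p.x, by have := hx 1; have := hx 2; omega, Multiset.ext.2 fun g ↦ ?_⟩
  by_cases hg : g ∈ p.edges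
  · rw [Multiset.count_filter_of_pos ⟨0, Plane.mem_verts_of_mem_edges hg 0⟩, hcount g hg,
      Multiset.count_nsmul, Multiset.count_eq_one_of_mem p.edges.nodup hg, mul_one]
  · have hfilter : g ∉ H.filter fun e ↦ ∃ i, e i ∈ p.verts i := fun h ↦
      hg <| (Multiset.mem_filter.1 h).2.elim fun _ ↦
        hreg.mem_edges_of_mem_verts hp (Multiset.mem_filter.1 h).1
    rw [Multiset.count_eq_zero_of_notMem hfilter, Multiset.count_nsmul,
      Multiset.count_eq_zero_of_notMem (s := p.edges.val) hg, mul_zero]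

end IsEdgeRegular

lemma exists_planeComponents [Fintype V] {r ν : ℕ} (hreg : IsEdgeRegular H r)
    (hν : IsGreatest {k | ∃ M, IsEdgeMatching H M ∧ #M = k} ν) :
    ∃ T : Finset (Plane V), (∀ p ∈ T, ∃ s, 2 * s = r ∧ p.IsComponent H s) ∧
      (∀ p ∈ T, ∀ q ∈ T, ∀ i, ∀ v ∈ p.verts i, v ∈ q.verts i → p = q) ∧
      4 * (r * Fintype.card V) + ν ≤ 8 * (r * ν) + #T := by
  obtain ⟨M, B, hO, rfl⟩ := exists_isOptimal hν
  let T : Finset (Plane V) := {p ∈ B | 2 * r ≤ H.countP (· ∈ p.edges)}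
  refine ⟨T, fun p hp ↦ hreg.exists_isComponent (mem_filter.1 hp).2, fun p hp q hq ↦
    hO.eq_of_mem_verts p (mem_filter.1 hp).1 q (mem_filter.1 hq).1, ?_⟩
  have hedges : ∑ p ∈ B, H.countP (· ∈ p.edges) + #B ≤ #B * (2 * r) + #T := by
    calc ∑ p ∈ B, H.countP (· ∈ p.edges) + #B
        = ∑ p ∈ B, (H.countP (· ∈ p.edges) + 1) := by rw [sum_add_distrib, card_eq_sum_ones]
      _ ≤ ∑ p ∈ B, (2 * r + if 2 * r ≤ H.countP (· ∈ p.edges) then 1 else 0) := by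
          refine sum_le_sum fun p _ ↦ ?_
          have := hreg.countP_mem_edges_le p
          split_ifs <;> omega
      _ = #B * (2 * r) + #T := by
          rw [sum_add_distrib, sum_const, smul_eq_mul, ← card_filter]
  linarith [hreg.four_mul_add_le hO]

end Packings

section Transport

open Finset

lemma isGreatest_matchNum {α β γ : Type*} (H : Multiset (α × β × γ)) :
    IsGreatest {k | ∃ M, IsMatching H M ∧ #M = k} (matchNum H) := by
  have hbdd : BddAbove {k | ∃ M, IsMatching H M ∧ #M = k} := by
    refine ⟨H.card, ?_⟩
    rintro _ ⟨M, hM, rfl⟩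
    exact Multiset.card_le_card ((Multiset.le_iff_subset M.nodup).2 fun e he ↦ hM.1 e he)
  exact ⟨Nat.sSup_mem ⟨0, ∅, by simp [IsMatching]⟩ hbdd, fun k hk ↦ le_csSup hbdd hk⟩

/-- The identification of the edges of a 3-partite 3-graph with functions on the set of vertex
classes, given an identification of each class with `V`. -/
def edgeEquiv {α β γ V : Type*} (ea : α ≃ V) (eb : β ≃ V) (ec : γ ≃ V) :
    α × β × γ ≃ Edge V where
  toFun e := ![ea e.1, eb e.2.1, ec e.2.2]
  invFun e := (ea.symm (e 0), eb.symm (e 1), ec.symm (e 2))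
  left_inv e := by simp
  right_inv e := by
    funext i
    fin_cases i <;> simp

variable {α β γ V : Type*} {H : Multiset (α × β × γ)} {ea : α ≃ V} {eb : β ≃ V} {ec : γ ≃ V}

lemma apart_edgeEquiv {e f : α × β × γ} : Apart (edgeEquiv ea eb ec e) (edgeEquiv ea eb ec f) ↔
    e.1 ≠ f.1 ∧ e.2.1 ≠ f.2.1 ∧ e.2.2 ≠ f.2.2 := by
  simp [Apart, edgeEquiv, Fin.forall_fin_succ]

lemma isEdgeMatching_map {M : Finset (α × β × γ)} :
    IsEdgeMatching (H.map (edgeEquiv ea eb ec)) (M.map (edgeEquiv ea eb ec).toEmbedding) ↔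
      IsMatching H M := by
  have hinj := (edgeEquiv ea eb ec).injective
  refine ⟨fun h ↦ ⟨fun e he ↦ (Multiset.mem_map_of_injective hinj).1
    (h.mem _ (mem_map_of_mem _ he)), fun e he f hf hef ↦ apart_edgeEquiv.1
      (h.apart (mem_map_of_mem _ he) (mem_map_of_mem _ hf) (hinj.ne hef))⟩, fun h ↦ ⟨?_, ?_⟩⟩
  · exact forall_mem_map.2 fun e he ↦ Multiset.mem_map_of_mem _ (h.1 e he)
  · rw [coe_map]
    rintro _ ⟨e, he, rfl⟩ _ ⟨f, hf, rfl⟩ hef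
    exact apart_edgeEquiv.2 (h.2 e he f hf fun h ↦ hef (h ▸ rfl))

lemma isGreatest_card_isEdgeMatching (H : Multiset (α × β × γ)) (ea : α ≃ V) (eb : β ≃ V)
    (ec : γ ≃ V) :
    IsGreatest {k | ∃ M, IsEdgeMatching (H.map (edgeEquiv ea eb ec)) M ∧ #M = k}
      (matchNum H) := by
  convert isGreatest_matchNum H using 3
  rw [← (edgeEquiv ea eb ec).finsetCongr.exists_congr_right]
  simp [isEdgeMatching_map]

variable [DecidableEq V]

lemma symm_pair_inter_eq_empty {p q : Plane V} {i : Fin 3} (e : α ≃ V) [DecidableEq α]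
    (h : ∀ v ∈ p.verts i, v ∉ q.verts i) :
    ({e.symm (p.x i), e.symm (p.y i)} : Finset α) ∩ {e.symm (q.x i), e.symm (q.y i)} = ∅ := by
  have hdisj := (disjoint_map e.symm.toEmbedding).2 (disjoint_left.2 h)
  simpa [Plane.verts, map_insert, disjoint_iff_inter_eq_empty] using hdisj

namespace Plane

lemma map_fanoEdges (p : Plane V) (ea : α ≃ V) (eb : β ≃ V) (ec : γ ≃ V) :
    (fanoEdges (ea.symm (p.x 0)) (ea.symm (p.y 0)) (eb.symm (p.x 1)) (eb.symm (p.y 1))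
      (ec.symm (p.x 2)) (ec.symm (p.y 2))).map (edgeEquiv ea eb ec) = p.edges.val := by
  have hsymm : fanoEdges (ea.symm (p.x 0)) (ea.symm (p.y 0)) (eb.symm (p.x 1)) (eb.symm (p.y 1))
      (ec.symm (p.x 2)) (ec.symm (p.y 2)) = (p.x ::ₘ (univ : Finset (Fin 3)).val.map fun i ↦
        Function.update p.y i (p.x i)).map (edgeEquiv ea eb ec).symm := by
    rw [Fin.univ_val_map]
    simp only [fanoEdges, edgeEquiv, Equiv.symm_mk, Equiv.coe_fn_mk, Multiset.insert_eq_cons,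
      List.ofFn_succ, List.ofFn_zero, Fin.isValue, Fin.succ_zero_eq_one, Fin.succ_one_eq_two,
      Multiset.cons_coe, Multiset.map_coe, List.map_cons, List.map_nil, Function.update_self,
      ne_eq, one_ne_zero, zero_ne_one, Fin.reduceEq, not_false_eq_true, Function.update_of_ne]
    rfl
  rw [hsymm, ← edges_val, Multiset.map_map]
  simp

end Plane

variable [DecidableEq α] [DecidableEq β] [DecidableEq γ]

lemma IsRegular.isEdgeRegular {r : ℕ} (hH : IsRegular H r) (ea : α ≃ V) (eb : β ≃ V)
    (ec : γ ≃ V) : IsEdgeRegular (H.map (edgeEquiv ea eb ec)) r := fun i v ↦ by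
  obtain ⟨ha, hb, hc⟩ := hH
  rw [Multiset.countP_map]
  fin_cases i
  · rw [← ha (ea.symm v)]
    exact congrArg _ (Multiset.filter_congr fun e _ ↦ by simp [edgeEquiv, Equiv.eq_symm_apply])
  · rw [← hb (eb.symm v)]
    exact congrArg _ (Multiset.filter_congr fun e _ ↦ by simp [edgeEquiv, Equiv.eq_symm_apply])
  · rw [← hc (ec.symm v)]
    exact congrArg _ (Multiset.filter_congr fun e _ ↦ by simp [edgeEquiv, Equiv.eq_symm_apply])

namespace Plane

lemma IsComponent.isFanoComponent {p : Plane V} {s : ℕ}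
    (hp : p.IsComponent (H.map (edgeEquiv ea eb ec)) s) :
    IsFanoComponent H s (ea.symm (p.x 0)) (ea.symm (p.y 0)) (eb.symm (p.x 1)) (eb.symm (p.y 1))
      (ec.symm (p.x 2)) (ec.symm (p.y 2)) := by
  refine ⟨by simpa using p.apart 0, by simpa using p.apart 1, by simpa using p.apart 2, ?_⟩
  refine Multiset.map_injective (edgeEquiv ea eb ec).injective ?_
  rw [Multiset.map_nsmul, map_fanoEdges, ← hp, Multiset.filter_map]
  congr 1
  refine Multiset.filter_congr fun e _ ↦ ?_
  simp [edgeEquiv, Fin.exists_fin_succ, mem_verts, Equiv.eq_symm_apply, or_assoc]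

end Plane

end Transport

theorem stmt14_general {α β γ : Type*} [Fintype α] [Fintype β] [Fintype γ]
    [DecidableEq α] [DecidableEq β] [DecidableEq γ]
    (H : Multiset (α × β × γ)) (n r : ℕ) (hr : 1 ≤ r) (ε : ℝ)
    (hreg : IsRegular H r)
    (hA : Fintype.card α = n) (hB : Fintype.card β = n) (hC : Fintype.card γ = n)
    (hnu : (matchNum H : ℝ) ≤ (1 + ε) * n / 2) :
    ∃ T : Finset (α × α × β × β × γ × γ),
      (∀ t ∈ T, ∃ s : ℕ, 2 * s = r ∧
        IsFanoComponent H s t.1 t.2.1 t.2.2.1 t.2.2.2.1 t.2.2.2.2.1 t.2.2.2.2.2) ∧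
      (∀ t ∈ T, ∀ t' ∈ T, t ≠ t' →
        ({t.1, t.2.1} : Finset α) ∩ {t'.1, t'.2.1} = ∅ ∧
        ({t.2.2.1, t.2.2.2.1} : Finset β) ∩ {t'.2.2.1, t'.2.2.2.1} = ∅ ∧
        ({t.2.2.2.2.1, t.2.2.2.2.2} : Finset γ) ∩ {t'.2.2.2.2.1, t'.2.2.2.2.2} = ∅) ∧
      (1 - (8 * (r : ℝ) - 1) * ε) * n / 2 ≤ (T.card : ℝ) := by
  let ea := Fintype.equivFinOfCardEq hA
  let eb := Fintype.equivFinOfCardEq hB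
  let ec := Fintype.equivFinOfCardEq hC
  obtain ⟨T, hcomp, hdisj, hcard⟩ := exists_planeComponents (hreg.isEdgeRegular ea eb ec)
    (isGreatest_card_isEdgeMatching H ea eb ec)
  let vertices (p : Plane (Fin n)) : α × α × β × β × γ × γ :=
    (ea.symm (p.x 0), ea.symm (p.y 0), eb.symm (p.x 1), eb.symm (p.y 1), ec.symm (p.x 2),
      ec.symm (p.y 2))
  have hvertices : Set.InjOn vertices T := fun p hp q hq h ↦
    hdisj p hp q hq 0 (p.x 0) (Plane.mem_verts.2 (.inl rfl))
      (Plane.mem_verts.2 (.inl (ea.symm.injective (congrArg Prod.fst h))))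
  refine ⟨T.image vertices, Finset.forall_mem_image.2 fun p hp ↦
    (hcomp p hp).imp fun s ↦ And.imp_right Plane.IsComponent.isFanoComponent,
    Finset.forall_mem_image.2 fun p hp ↦ Finset.forall_mem_image.2 fun q hq hpq ↦ ?_, ?_⟩
  · have hpq' (i : Fin 3) : ∀ v ∈ p.verts i, v ∉ q.verts i := fun v hv hv' ↦
      hpq (congrArg vertices (hdisj p hp q hq i v hv hv'))
    exact ⟨symm_pair_inter_eq_empty ea (hpq' 0), symm_pair_inter_eq_empty eb (hpq' 1),
      symm_pair_inter_eq_empty ec (hpq' 2)⟩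
  · rw [Finset.card_image_of_injOn hvertices]
    rw [Fintype.card_fin] at hcard
    have hr' : (1 : ℝ) ≤ r := mod_cast hr
    have hcard' : 4 * ((r : ℝ) * n) + matchNum H ≤ 8 * (r * matchNum H) + T.card := mod_cast hcard
    have hnu' := mul_le_mul_of_nonneg_left hnu (by linarith : 0 ≤ 8 * (r : ℝ) - 1)
    linarith

/-- Weaker stability theorem for regular 3-partite 3-graphs: if `H` is `r`-regular
(`r ≥ 2`) with `n` vertices in each class and `ν(H) ≤ (1 + ε)·n/2`, then `H` has at least
`(1 − (30r − 35)ε)·n/2` connected components that are copies of `(r/2) • F`. -/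
theorem stmt14 {α β γ : Type*} [Fintype α] [Fintype β] [Fintype γ]
    [DecidableEq α] [DecidableEq β] [DecidableEq γ]
    (H : Multiset (α × β × γ)) (n r : ℕ) (hr : 2 ≤ r) (ε : ℝ) (hε : 0 ≤ ε)
    (hreg : IsRegular H r)
    (hA : Fintype.card α = n) (hB : Fintype.card β = n) (hC : Fintype.card γ = n)
    (hnu : (matchNum H : ℝ) ≤ (1 + ε) * n / 2) :
    ∃ T : Finset (α × α × β × β × γ × γ),
      (∀ t ∈ T, ∃ s : ℕ, 2 * s = r ∧
        IsFanoComponent H s t.1 t.2.1 t.2.2.1 t.2.2.2.1 t.2.2.2.2.1 t.2.2.2.2.2) ∧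
      (∀ t ∈ T, ∀ t' ∈ T, t ≠ t' →
        ({t.1, t.2.1} : Finset α) ∩ {t'.1, t'.2.1} = ∅ ∧
        ({t.2.2.1, t.2.2.2.1} : Finset β) ∩ {t'.2.2.1, t'.2.2.2.1} = ∅ ∧
        ({t.2.2.2.2.1, t.2.2.2.2.2} : Finset γ) ∩ {t'.2.2.2.2.1, t'.2.2.2.2.2} = ∅) ∧
      (1 - (30 * (r : ℝ) - 35) * ε) * n / 2 ≤ (T.card : ℝ) := by
  obtain ⟨T, hcomp, hdisj, hcard⟩ := stmt14_general H n r (by omega) ε hreg hA hB hC hnu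
  have hr' : (2 : ℝ) ≤ r := mod_cast hr
  have hconst : (8 * (r : ℝ) - 1) * ε ≤ (30 * r - 35) * ε := by gcongr ?_ * ε; linarith
  exact ⟨T, hcomp, hdisj, le_trans (by gcongr) hcard⟩

end Tripartite
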